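/- arXiv:1207.5141 — 3 statements merged into one kernel-verified Lean document; each statement's English description precedes it below -/
import Mathlib

section
/- Let n ≥ 2 and fix θ ∈ S^{n-1}. Let σ : ℝ^n × S^{n-1} → ℝ be continuous, bounded and nonnegative, let k : ℝ^n × S^{n-1} × S^{n-1} → ℝ be continuous and bounded, and let f : ℝ^n → ℝ be continuous with compact support. Then ∫_{S^{n-1}} k(x,θ,θ') ( ∫_{-∞}^0 exp(-∫_s^0 σ(x+τθ',θ')dτ) f(x+sθ') ds ) dν(θ') = ∫_{ℝ^n} k(x, θ, (x-y)/|x-y|) · exp( -∫_0^{|x-y|} σ( x - u(x-y)/|x-y|, (x-y)/|x-y| ) du ) · f(y) · |x-y|^{1-n} dy; that is, the once-scattered contribution K T_1^{-1} J f(x,θ) is a weakly singular integral operator in the spatial variable with singularity |x-y|^{-(n-1)}. -/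
open MeasureTheory Real Set Metric

theorem aux_integrable_vol (m : ℕ) (R C : ℝ) :
    Integrable (fun r : Ioi (0 : ℝ) => (Iic R).indicator (fun t : ℝ => C * (t ^ m)⁻¹) r.1)
      (Measure.volumeIoiPow m) := by
  rw [Measure.volumeIoiPow, integrable_withDensity_iff_integrable_smul' (by fun_prop) (by simp)]
  have h : IntegrableOn ((Iic R).indicator (fun _ : ℝ => C)) (Ioi 0) := by
    rw [IntegrableOn, integrable_indicator_iff measurableSet_Iic, IntegrableOn,
      Measure.restrict_restrict measurableSet_Iic, Set.inter_comm, Ioi_inter_Iic]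
    exact integrableOn_const (by simp)
  rw [integrableOn_iff_comap_subtypeVal measurableSet_Ioi] at h
  refine h.congr (.of_forall ?_)
  rintro ⟨t, ht : 0 < t⟩
  have : t ^ m ≠ 0 := by positivity
  by_cases hR : t ≤ R
  · simp [hR, ENNReal.toReal_ofReal (pow_nonneg ht.le m)]
    field_simp
  · simp [hR]

theorem aux_integral_vol (m : ℕ) (g : ℝ → ℝ) :
    ∫ r : Ioi (0 : ℝ), g r * ((r : ℝ) ^ m)⁻¹ ∂(Measure.volumeIoiPow m) =
      ∫ r in Ioi (0 : ℝ), g r := by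
  simp only [Measure.volumeIoiPow, ENNReal.ofReal]
  rw [integral_withDensity_eq_integral_smul,
    integral_subtype_comap measurableSet_Ioi
      fun a ↦ Real.toNNReal (a ^ m) • (g a * (a ^ m)⁻¹),
    setIntegral_congr_fun measurableSet_Ioi fun x hx ↦ ?_]
  · have : x ^ m ≠ 0 := pow_ne_zero _ (ne_of_gt hx)
    simp only [NNReal.smul_def, Real.coe_toNNReal _ (pow_nonneg hx.out.le m), smul_eq_mul]
    field_simp
  · exact (measurable_subtype_coe.pow_const _).real_toNNReal

/-- The once-scattered contribution `K T₁⁻¹ J f(x,θ)` equals a weakly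
singular integral operator in the spatial variable with singularity `|x-y|^{-(n-1)}`:
`∫_{Sⁿ⁻¹} k(x,θ,θ') (∫_{-∞}^0 exp(-∫_s^0 σ(x+τθ',θ')dτ) f(x+sθ') ds) dν(θ')
  = ∫_{ℝⁿ} k(x,θ,(x-y)/|x-y|) exp(-∫_0^{|x-y|} σ(x-u(x-y)/|x-y|,(x-y)/|x-y|) du)
      f(y) |x-y|^{1-n} dy`. -/
theorem stmt6 (n : ℕ) (hn : 2 ≤ n) (θ : EuclideanSpace ℝ (Fin n)) (hθ : ‖θ‖ = 1)
    (ν : Measure (sphere (0 : EuclideanSpace ℝ (Fin n)) 1))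
    (hν : ν = (volume : Measure (EuclideanSpace ℝ (Fin n))).toSphere)
    (σ : EuclideanSpace ℝ (Fin n) → EuclideanSpace ℝ (Fin n) → ℝ)
    (hσ : Continuous fun p : EuclideanSpace ℝ (Fin n) × EuclideanSpace ℝ (Fin n) =>
      σ p.1 p.2)
    (hσb : ∃ M : ℝ, ∀ x v, |σ x v| ≤ M) (hσ0 : ∀ x v, 0 ≤ σ x v)
    (k : EuclideanSpace ℝ (Fin n) → EuclideanSpace ℝ (Fin n) →
      EuclideanSpace ℝ (Fin n) → ℝ)
    (hk : Continuous fun p : EuclideanSpace ℝ (Fin n) × EuclideanSpace ℝ (Fin n) ×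
      EuclideanSpace ℝ (Fin n) => k p.1 p.2.1 p.2.2)
    (hkb : ∃ M : ℝ, ∀ x v w, |k x v w| ≤ M)
    (f : EuclideanSpace ℝ (Fin n) → ℝ) (hf : Continuous f) (hfc : HasCompactSupport f) :
    ∀ x : EuclideanSpace ℝ (Fin n),
      (∫ ω : sphere (0 : EuclideanSpace ℝ (Fin n)) 1,
          k x θ (ω : EuclideanSpace ℝ (Fin n)) *
            (∫ s in Iic (0 : ℝ),
              Real.exp (-(∫ τ in s..(0 : ℝ),
                  σ (x + τ • (ω : EuclideanSpace ℝ (Fin n)))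
                    (ω : EuclideanSpace ℝ (Fin n)))) *
                f (x + s • (ω : EuclideanSpace ℝ (Fin n)))) ∂ν) =
      ∫ y : EuclideanSpace ℝ (Fin n),
        k x θ (‖x - y‖⁻¹ • (x - y)) *
          Real.exp (-(∫ u in (0 : ℝ)..‖x - y‖,
              σ (x - u • (‖x - y‖⁻¹ • (x - y))) (‖x - y‖⁻¹ • (x - y)))) *
          f y * (‖x - y‖ ^ (n - 1))⁻¹ := by
  intro x
  subst hν
  have : Nonempty (Fin n) := ⟨⟨0, by omega⟩⟩
  obtain ⟨M, hM⟩ := hkb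
  obtain ⟨F, hF⟩ := hfc.exists_bound_of_continuous hf
  obtain ⟨R, hR⟩ := hfc.isCompact.isBounded.subset_closedBall x
  set m := n - 1 with hm
  let P : EuclideanSpace ℝ (Fin n) → ℝ → ℝ := fun w r =>
    k x θ w * (Real.exp (-(∫ u in (0 : ℝ)..r, σ (x - u • w) w)) * f (x - r • w))
  have hPc : Continuous (fun p : EuclideanSpace ℝ (Fin n) × ℝ => P p.1 p.2) := by
    have h1 : Continuous (fun p : EuclideanSpace ℝ (Fin n) × ℝ =>
        ∫ u in (0 : ℝ)..p.2, σ (x - u • p.1) p.1) := by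
      apply intervalIntegral.continuous_parametric_intervalIntegral_of_continuous _ continuous_snd
      exact hσ.comp (f := fun q : (EuclideanSpace ℝ (Fin n) × ℝ) × ℝ =>
        (x - q.2 • q.1.1, q.1.1)) (by fun_prop)
    have h2 : Continuous (fun p : EuclideanSpace ℝ (Fin n) × ℝ => k x θ p.1) :=
      hk.comp (f := fun p : EuclideanSpace ℝ (Fin n) × ℝ => (x, θ, p.1)) (by fun_prop)
    exact h2.mul ((Real.continuous_exp.comp h1.neg).mul (hf.comp (by fun_prop)))
  let H : sphere (0 : EuclideanSpace ℝ (Fin n)) 1 × Ioi (0 : ℝ) → ℝ := fun p =>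
    P p.1 p.2 * ((p.2 : ℝ) ^ m)⁻¹
  have hHint : Integrable H ((volume : Measure (EuclideanSpace ℝ (Fin n))).toSphere.prod
      (Measure.volumeIoiPow m)) := by
    refine ((aux_integrable_vol m R (M * F)).comp_snd _).mono' ?_ (.of_forall ?_)
    · apply Measurable.aestronglyMeasurable
      apply Measurable.mul
      · exact (hPc.comp (f := fun p : sphere (0 : EuclideanSpace ℝ (Fin n)) 1 × Ioi (0 : ℝ) =>
          ((p.1 : EuclideanSpace ℝ (Fin n)), (p.2 : ℝ))) (by fun_prop)).measurable
      · fun_prop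
    · rintro ⟨⟨w, hw⟩, ⟨r, hr : 0 < r⟩⟩
      have hw1 : ‖w‖ = 1 := by simpa using hw
      have hpos : 0 ≤ (r ^ m)⁻¹ := by positivity
      have hMn : 0 ≤ M := (abs_nonneg _).trans (hM x θ w)
      by_cases hrR : r ≤ R
      · simp only [H, P, mem_Iic, hrR, indicator_of_mem, norm_mul, Real.norm_eq_abs,
          abs_of_nonneg hpos, Real.abs_exp]
        have he : Real.exp (-(∫ u in (0 : ℝ)..r, σ (x - u • w) w)) ≤ 1 := by
          rw [Real.exp_le_one_iff, neg_nonpos]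
          exact intervalIntegral.integral_nonneg hr.le fun u _ => hσ0 _ _
        have hf1 := hF (x - r • w)
        rw [Real.norm_eq_abs] at hf1
        gcongr
        · exact hM x θ w
        · calc _ ≤ 1 * F := by gcongr
            _ = F := one_mul F
      · have hz : f (x - r • w) = 0 := by
          apply image_eq_zero_of_notMem_tsupport
          intro hmem
          have := hR hmem
          simp [norm_smul, hw1, abs_of_pos hr] at this
          exact hrR this
        simp [H, P, hz, hrR]
  let G : EuclideanSpace ℝ (Fin n) → ℝ := fun z => P (‖z‖⁻¹ • z) ‖z‖ * (‖z‖ ^ m)⁻¹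
  have hpolar : ∫ z, G z = ∫ p, H p ∂((volume : Measure (EuclideanSpace ℝ (Fin n))).toSphere.prod
      (Measure.volumeIoiPow m)) := by
    have hfr : Module.finrank ℝ (EuclideanSpace ℝ (Fin n)) - 1 = m := by simp [hm]
    have key := (volume : Measure (EuclideanSpace ℝ (Fin n))).measurePreserving_homeomorphUnitSphereProd.integral_comp
        (Homeomorph.measurableEmbedding _) H
    rw [hfr] at key
    rw [← key, ← restrict_compl_singleton (μ := volume) (0 : EuclideanSpace ℝ (Fin n)),
      ← integral_subtype_comap (measurableSet_singleton _).compl, restrict_compl_singleton]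
    simp [H, G]
  have hR2 : (∫ y : EuclideanSpace ℝ (Fin n),
        k x θ (‖x - y‖⁻¹ • (x - y)) *
          Real.exp (-(∫ u in (0 : ℝ)..‖x - y‖,
              σ (x - u • (‖x - y‖⁻¹ • (x - y))) (‖x - y‖⁻¹ • (x - y)))) *
          f y * (‖x - y‖ ^ m)⁻¹) = ∫ z, G z := by
    rw [← integral_sub_left_eq_self G volume x]
    refine integral_congr_ae ?_
    have hne : ∀ᵐ y : EuclideanSpace ℝ (Fin n), y ≠ x := by simp [ae_iff]
    filter_upwards [hne] with y hy
    have h0 : ‖x - y‖ ≠ 0 := by simpa [sub_eq_zero] using hy.symm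
    have : x - ‖x - y‖ • ‖x - y‖⁻¹ • (x - y) = y := by
      rw [smul_inv_smul₀ h0, sub_sub_cancel]
    simp only [G, P, this]
    ring
  rw [hR2, hpolar, integral_prod _ hHint]
  refine integral_congr_ae (.of_forall fun ω => ?_)
  simp only [H]
  rw [aux_integral_vol m (fun r => P ω r)]
  simp only [P]
  rw [integral_const_mul]
  congr 1
  rw [← neg_zero, ← integral_comp_neg_Iic, neg_zero]
  refine setIntegral_congr_fun measurableSet_Iic fun s _ => ?_
  have := intervalIntegral.integral_comp_neg (a := s) (b := 0)
    (fun u => σ (x - u • (ω : EuclideanSpace ℝ (Fin n))) ω)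
  simp only [neg_smul, sub_neg_eq_add, neg_zero] at this ⊢
  rw [this]
end

section
/- Let n ≥ 3, let 2 ≤ m ≤ n-1, and let Ω ⊂ ℝ^n be a bounded measurable set. Then there exists a constant C > 0 such that for all x, y ∈ ℝ^n with x ≠ y, setting y_0 := x and y_m := y, ∫_{Ω} ⋯ ∫_{Ω} ∏_{j=0}^{m-1} |y_j - y_{j+1}|^{-(n-1)} dy_1 ⋯ dy_{m-1} ≤ C |x-y|^{-(n-m)}. -/
open MeasureTheory Real Set

noncomputable def KK {n : ℕ} (a : ℕ) (z : EuclideanSpace ℝ (Fin n)) : ENNReal :=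
  (ENNReal.ofReal (‖z‖ ^ a))⁻¹

lemma KK_meas {n : ℕ} (a : ℕ) : Measurable (KK (n := n) a) := by
  unfold KK; fun_prop

lemma KK_eq {n : ℕ} (a : ℕ) {z : EuclideanSpace ℝ (Fin n)} (hz : z ≠ 0) :
    KK a z = ENNReal.ofReal ((‖z‖ ^ a)⁻¹) := by
  unfold KK
  rw [ENNReal.ofReal_inv_of_pos (by positivity)]

lemma polar {n : ℕ} (hn : 1 ≤ n) : ∃ c : ℝ, 0 ≤ c ∧ ∀ f : ℝ → ℝ, (∀ t, 0 < t → 0 ≤ f t) →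
    IntegrableOn (fun y : ℝ => y ^ (n - 1) * f y) (Ioi 0) →
    ∫⁻ z : EuclideanSpace ℝ (Fin n), ENNReal.ofReal (f ‖z‖) =
      ENNReal.ofReal (c * ∫ y in Ioi (0:ℝ), y ^ (n - 1) * f y) := by
  have : Nonempty (Fin n) := ⟨⟨0, hn⟩⟩
  refine ⟨n * (volume : Measure (EuclideanSpace ℝ (Fin n))).real (Metric.ball 0 1), by positivity, ?_⟩
  intro f hf hi
  have h1 := integrable_fun_norm_addHaar (volume : Measure (EuclideanSpace ℝ (Fin n))) (f := f)
  have h2 := integral_fun_norm_addHaar (volume : Measure (EuclideanSpace ℝ (Fin n))) f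
  simp only [finrank_euclideanSpace, Fintype.card_fin, smul_eq_mul, nsmul_eq_mul] at h1 h2
  rw [mul_assoc, ← h2, ofReal_integral_eq_lintegral_ofReal (h1.2 hi)]
  have : ∀ᵐ z : EuclideanSpace ℝ (Fin n), z ≠ 0 := by
    simp [ae_iff]
  filter_upwards [this] with z hz
  exact hf _ (by positivity)

lemma near {n a : ℕ} (ha : a < n) : ∃ C : ℝ, 0 ≤ C ∧ ∀ R : ℝ, 0 < R →
    ∫⁻ z : EuclideanSpace ℝ (Fin n), (Metric.ball 0 R).indicator (KK a) z ≤
      ENNReal.ofReal (C * R ^ (n - a)) := by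
  obtain ⟨c, hc, h⟩ := polar (n := n) (by omega)
  have : Nonempty (Fin n) := ⟨⟨0, by omega⟩⟩
  refine ⟨c, hc, fun R hR => ?_⟩
  have key : EqOn (fun y : ℝ => y ^ (n - 1) * (Iio R).indicator (fun y => (y ^ a)⁻¹) y)
      ((Iio R).indicator (fun y => y ^ (n - 1 - a))) (Ioi 0) := by
    intro y hy
    have hy : 0 < y := hy
    by_cases hyR : y ∈ Iio R
    · simp only [indicator_of_mem hyR]
      rw [pow_sub₀ (m := n - 1) _ hy.ne' (by omega)]
    · simp only [indicator_of_notMem hyR, mul_zero]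
  have hI : IntegrableOn (fun y : ℝ => y ^ (n - 1 - a)) (Ioc 0 R) :=
    (continuous_pow _).integrableOn_Ioc
  have hI' : IntegrableOn (fun y : ℝ => y ^ (n - 1 - a)) (Ioi 0 ∩ Iio R) := 
    hI.mono_set fun y hy => ⟨hy.1, le_of_lt hy.2⟩
  have h' := h ((Iio R).indicator (fun y => (y ^ a)⁻¹)) ?_ ?_
  · have e : ∫⁻ z : EuclideanSpace ℝ (Fin n), (Metric.ball 0 R).indicator (KK a) z =
      ∫⁻ z : EuclideanSpace ℝ (Fin n), ENNReal.ofReal ((Iio R).indicator (fun y => (y ^ a)⁻¹) ‖z‖) := by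
      apply lintegral_congr_ae
      have : ∀ᵐ z : EuclideanSpace ℝ (Fin n), z ≠ 0 := by simp [ae_iff]
      filter_upwards [this] with z hz
      by_cases hzR : ‖z‖ < R
      · rw [indicator_of_mem (by simpa using hzR), indicator_of_mem (by simpa using hzR), KK_eq _ hz]
      · rw [indicator_of_notMem (by simpa using hzR), indicator_of_notMem (by simpa using hzR)]
        simp
    rw [e, h']
    apply ENNReal.ofReal_le_ofReal
    gcongr
    rw [setIntegral_congr_fun measurableSet_Ioi key, setIntegral_indicator measurableSet_Iio]
    calc _ ≤ ∫ y in Ioc 0 R, y ^ (n - 1 - a) := by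
          apply setIntegral_mono_set hI
          · filter_upwards [ae_restrict_mem measurableSet_Ioc] with y hy
            exact pow_nonneg hy.1.le _
          · exact LE.le.eventuallyLE fun y hy => ⟨hy.1, le_of_lt hy.2⟩
      _ = R ^ (n - 1 - a + 1) / ((n - 1 - a : ℕ) + 1) := by
          rw [← intervalIntegral.integral_of_le hR.le, integral_pow]; simp
      _ ≤ _ := by
          rw [show n - 1 - a + 1 = n - a by omega]
          apply div_le_self (by positivity)
          simp
  · intro t ht
    by_cases h : t ∈ Iio R
    · rw [indicator_of_mem h]; positivity
    · rw [indicator_of_notMem h]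
  · rw [integrableOn_congr_fun key measurableSet_Ioi]
    rw [IntegrableOn, integrable_indicator_iff measurableSet_Iio]
    rw [IntegrableOn, Measure.restrict_restrict measurableSet_Iio, inter_comm]
    exact hI'

lemma far {n s : ℕ} (hn : 1 ≤ n) (ha : n < s) : ∃ C : ℝ, 0 ≤ C ∧ ∀ R : ℝ, 0 < R →
    ∫⁻ z : EuclideanSpace ℝ (Fin n), (Metric.ball 0 R)ᶜ.indicator (KK s) z ≤
      ENNReal.ofReal (C * (R ^ (s - n))⁻¹) := by
  obtain ⟨c, hc, h⟩ := polar (n := n) (by omega)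
  have : Nonempty (Fin n) := ⟨⟨0, by omega⟩⟩
  refine ⟨c, hc, fun R hR => ?_⟩
  have hsn : (1:ℝ) ≤ (s - n : ℕ) := by exact_mod_cast (by omega : 1 ≤ s - n)
  have hlt : -((s - n : ℕ) : ℝ) - 1 < -1 := by linarith
  have key : EqOn (fun y : ℝ => y ^ (n - 1) * (Ici R).indicator (fun y => (y ^ s)⁻¹) y)
      ((Ici R).indicator (fun y => y ^ (-((s - n : ℕ) : ℝ) - 1))) (Ioi 0) := by
    intro y hy
    have hy : 0 < y := hy
    by_cases hyR : y ∈ Ici R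
    · simp only [indicator_of_mem hyR]
      rw [show (-((s - n : ℕ) : ℝ) - 1) = -((s - n + 1 : ℕ) : ℝ) by push_cast; ring,
        rpow_neg hy.le, rpow_natCast]
      have : y ^ s = y ^ (n - 1) * y ^ (s - n + 1) := by
        rw [← pow_add]; congr 1; omega
      rw [this]
      field_simp
    · simp only [indicator_of_notMem hyR, mul_zero]
  have hI := integrableOn_Ioi_rpow_of_lt hlt hR
  have hIci : Ioi (0:ℝ) ∩ Ici R = Ici R := by
    ext y; simp only [mem_inter_iff, mem_Ioi, mem_Ici]; constructor
    · exact fun h => h.2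
    · exact fun h => ⟨by linarith, h⟩
  have h' := h ((Ici R).indicator (fun y => (y ^ s)⁻¹)) ?_ ?_
  · have e : ∫⁻ z : EuclideanSpace ℝ (Fin n), (Metric.ball 0 R)ᶜ.indicator (KK s) z =
      ∫⁻ z : EuclideanSpace ℝ (Fin n), ENNReal.ofReal ((Ici R).indicator (fun y => (y ^ s)⁻¹) ‖z‖) := by
      apply lintegral_congr_ae
      have : ∀ᵐ z : EuclideanSpace ℝ (Fin n), z ≠ 0 := by simp [ae_iff]
      filter_upwards [this] with z hz
      by_cases hzR : R ≤ ‖z‖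
      · rw [indicator_of_mem (by simpa using hzR), indicator_of_mem (by simpa using hzR), KK_eq _ hz]
      · rw [indicator_of_notMem (by simpa using hzR), indicator_of_notMem (by simpa using hzR)]
        simp
    rw [e, h']
    apply ENNReal.ofReal_le_ofReal
    gcongr
    rw [setIntegral_congr_fun measurableSet_Ioi key, setIntegral_indicator measurableSet_Ici,
      hIci, integral_Ici_eq_integral_Ioi, integral_Ioi_rpow_of_lt hlt hR]
    rw [sub_add_cancel, neg_div_neg_eq, rpow_neg hR.le, rpow_natCast]
    apply div_le_self (by positivity) hsn
  · intro t ht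
    by_cases h : t ∈ Ici R
    · rw [indicator_of_mem h]; positivity
    · rw [indicator_of_notMem h]
  · rw [integrableOn_congr_fun key measurableSet_Ioi]
    rw [IntegrableOn, integrable_indicator_iff measurableSet_Ici]
    rw [IntegrableOn, Measure.restrict_restrict measurableSet_Ici, inter_comm, hIci]
    exact (integrableOn_Ici_iff_integrableOn_Ioi).2 hI

lemma KK_anti {n : ℕ} (a : ℕ) {R : ℝ} (hR : 0 < R) {z : EuclideanSpace ℝ (Fin n)} (hz : R ≤ ‖z‖) :
    KK a z ≤ ENNReal.ofReal ((R ^ a)⁻¹) := by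
  unfold KK
  rw [ENNReal.ofReal_inv_of_pos (by positivity)]
  gcongr

lemma KK_prod {n : ℕ} (a b : ℕ) {z w : EuclideanSpace ℝ (Fin n)} (hz : z ≠ 0)
    (h : ‖z‖ ≤ ‖w‖) : KK a z * KK b w ≤ KK (a + b) z := by
  have hz' : 0 < ‖z‖ := by positivity
  have hw : w ≠ 0 := by
    rintro rfl
    simp at h; exact hz h
  rw [KK_eq _ hz, KK_eq _ hw, KK_eq _ hz, ← ENNReal.ofReal_mul (by positivity), pow_add, mul_inv]
  gcongr

lemma core {n a b : ℕ} (ha : a < n) (hb : b < n) (hab : n < a + b) : ∃ C : ℝ, 0 ≤ C ∧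
    ∀ x y : EuclideanSpace ℝ (Fin n), x ≠ y →
      ∫⁻ z, KK a (x - z) * KK b (z - y) ≤ ENNReal.ofReal C * KK (a + b - n) (x - y) := by
  obtain ⟨C1, hC1, h1⟩ := near ha
  obtain ⟨C2, hC2, h2⟩ := near hb
  obtain ⟨C3, hC3, h3⟩ := far (by omega) hab
  refine ⟨(C1 + C2 + C3 + C3) * 2 ^ (a + b - n), by positivity, fun x y hxy => ?_⟩
  have hxy' : x - y ≠ 0 := sub_ne_zero.2 hxy
  set R := ‖x - y‖ / 2 with hRdef
  have hR : 0 < R := by positivity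
  have hx : ‖x - y‖ = 2 * R := by rw [hRdef]; ring
  set B : Set (EuclideanSpace ℝ (Fin n)) := Metric.ball 0 R with hB
  have hBm : MeasurableSet B := measurableSet_ball
  have m1 : Measurable (B.indicator (KK (n := n) a)) := (KK_meas a).indicator hBm
  have m2 : Measurable (B.indicator (KK (n := n) b)) := (KK_meas b).indicator hBm
  have m3 : Measurable (Bᶜ.indicator (KK (n := n) (a + b))) := (KK_meas _).indicator hBm.compl
  have pt : ∀ z, KK a (x - z) * KK b (z - y) ≤
      B.indicator (KK a) (x - z) * ENNReal.ofReal ((R ^ b)⁻¹)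
      + B.indicator (KK b) (z - y) * ENNReal.ofReal ((R ^ a)⁻¹)
      + Bᶜ.indicator (KK (a + b)) (x - z) + Bᶜ.indicator (KK (a + b)) (z - y) := by
    intro z
    have tri : 2 * R ≤ ‖x - z‖ + ‖z - y‖ := by
      rw [← hx]; simpa using norm_add_le (x - z) (z - y)
    by_cases c1 : x - z ∈ B
    · have c1' : ‖x - z‖ < R := by simpa [hB] using c1
      refine le_trans ?_ (le_trans le_self_add (le_trans le_self_add le_self_add))
      rw [indicator_of_mem c1]
      gcongr
      exact KK_anti b hR (by linarith)
    · have c1' : R ≤ ‖x - z‖ := by simpa [hB] using c1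
      by_cases c2 : z - y ∈ B
      · have c2' : ‖z - y‖ < R := by simpa [hB] using c2
        refine le_trans ?_ (le_trans le_add_self (le_trans le_self_add le_self_add))
        rw [indicator_of_mem c2, mul_comm]
        gcongr
        exact KK_anti a hR (by linarith)
      · have c2' : R ≤ ‖z - y‖ := by simpa [hB] using c2
        rcases le_total ‖x - z‖ ‖z - y‖ with hle | hle
        · refine le_trans ?_ (le_trans le_add_self le_self_add)
          rw [indicator_of_mem (by exact c1)]
          exact KK_prod a b (norm_pos_iff.1 (by linarith)) hle
        · refine le_trans ?_ le_add_self
          rw [indicator_of_mem (by exact c2), mul_comm, add_comm a b]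
          exact KK_prod b a (norm_pos_iff.1 (by linarith)) hle
  have t1 : ∀ f : EuclideanSpace ℝ (Fin n) → ENNReal, ∫⁻ z, f (x - z) = ∫⁻ z, f z :=
    fun f => lintegral_sub_left_eq_self f x
  have t2 : ∀ f : EuclideanSpace ℝ (Fin n) → ENNReal, ∫⁻ z, f (z - y) = ∫⁻ z, f z :=
    fun f => lintegral_sub_right_eq_self f y
  refine (lintegral_mono pt).trans ?_
  rw [lintegral_add_right _ (by fun_prop), lintegral_add_right _ (by fun_prop),
    lintegral_add_right _ (by fun_prop), lintegral_mul_const _ (by fun_prop),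
    lintegral_mul_const _ (by fun_prop), t1, t2, t1, t2]
  calc _ ≤ ENNReal.ofReal (C1 * R ^ (n - a)) * ENNReal.ofReal ((R ^ b)⁻¹)
        + ENNReal.ofReal (C2 * R ^ (n - b)) * ENNReal.ofReal ((R ^ a)⁻¹)
        + ENNReal.ofReal (C3 * (R ^ (a + b - n))⁻¹) + ENNReal.ofReal (C3 * (R ^ (a + b - n))⁻¹) := by
        gcongr
        · exact h1 R hR
        · exact h2 R hR
        · exact h3 R hR
        · exact h3 R hR
    _ = _ := by
        rw [KK_eq _ hxy', ← ENNReal.ofReal_mul (by positivity), ← ENNReal.ofReal_mul (by positivity),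
          ← ENNReal.ofReal_mul (by positivity), ← ENNReal.ofReal_add (by positivity) (by positivity),
          ← ENNReal.ofReal_add (by positivity) (by positivity),
          ← ENNReal.ofReal_add (by positivity) (by positivity), hx, mul_pow]
        congr 1
        have e1 : R ^ b = R ^ (n - a) * R ^ (a + b - n) := by
          rw [← pow_add]; congr 1; omega
        have e2 : R ^ a = R ^ (n - b) * R ^ (a + b - n) := by
          rw [← pow_add]; congr 1; omega
        rw [e1, e2]
        field_simp

lemma chain {n : ℕ} (k : ℕ) (hk : k + 2 ≤ n) : ∃ C : ℝ, 0 < C ∧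
    ∀ x y : EuclideanSpace ℝ (Fin n), x ≠ y →
      ∫⁻ z : Fin k → EuclideanSpace ℝ (Fin n),
          ∏ j ∈ Finset.range (k + 1),
            KK (n - 1) ((if j = 0 then x else if h : j - 1 < k then z ⟨j - 1, h⟩ else y) -
                 (if h : j < k then z ⟨j, h⟩ else y)) ≤
        ENNReal.ofReal C * KK (n - (k + 1)) (x - y) := by
  induction k with
  | zero =>
    refine ⟨1, one_pos, fun x y hxy => ?_⟩
    simp [lintegral_unique, volume_pi]
  | succ k ih =>
    obtain ⟨C, hC, h⟩ := ih (by omega)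
    obtain ⟨D, hD, h'⟩ := core (n := n) (a := n - 1) (b := n - (k + 1)) (by omega) (by omega) (by omega)
    have : Nonempty (Fin n) := ⟨⟨0, by omega⟩⟩
    refine ⟨C * D + 1, by positivity, fun x y hxy => ?_⟩
    have e := (volume_preserving_piFinSuccAbove (fun _ : Fin (k + 1) => EuclideanSpace ℝ (Fin n)) 0).symm
    rw [← e.lintegral_comp_emb (MeasurableEquiv.measurableEmbedding _)]
    refine (lintegral_prod_le _).trans ?_
    calc _ ≤ ∫⁻ w : EuclideanSpace ℝ (Fin n), ENNReal.ofReal C *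
            (KK (n - 1) (x - w) * KK (n - (k + 1)) (w - y)) := by
          apply lintegral_mono_ae
          have : ∀ᵐ z : EuclideanSpace ℝ (Fin n), z ≠ y := by simp [ae_iff]
          have hx : ∀ᵐ z : EuclideanSpace ℝ (Fin n), z ≠ x := by simp [ae_iff]
          filter_upwards [this, hx] with w hw hwx
          rw [mul_left_comm]
          refine le_trans (le_of_eq ?_) (mul_le_mul_right (h w y hw) _)
          rw [← lintegral_const_mul' _ _ (by rw [KK_eq _ (sub_ne_zero.2 hwx.symm)]; simp)]
          apply lintegral_congr
          intro z
          rw [Finset.prod_range_succ', mul_comm]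
          congr 1
          apply Finset.prod_congr rfl
          intro j hj
          have hj : j < k + 1 := by simpa using hj
          have E0 : ∀ h0 : 0 < k + 1, (MeasurableEquiv.piFinSuccAbove
              (fun _ : Fin (k + 1) => EuclideanSpace ℝ (Fin n)) 0).symm (w, z) ⟨0, h0⟩ = w :=
            fun _ => rfl
          have ES : ∀ i, ∀ hi : i + 1 < k + 1, (MeasurableEquiv.piFinSuccAbove
              (fun _ : Fin (k + 1) => EuclideanSpace ℝ (Fin n)) 0).symm (w, z) ⟨i + 1, hi⟩
                = z ⟨i, by omega⟩ :=
            fun _ _ => rfl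
          congr 1
          rcases j with _ | j
          · by_cases hk0 : 0 < k
            · simp [hk0, E0, ES]
            · simp [hk0, E0]
          · have hj' : j < k := by omega
            by_cases hk0 : j + 1 < k
            · simp [hk0, hj', ES]
            · simp [hk0, hj', ES]
      _ = ENNReal.ofReal C * ∫⁻ w : EuclideanSpace ℝ (Fin n), 
            (KK (n - 1) (x - w) * KK (n - (k + 1)) (w - y)) := by
          rw [lintegral_const_mul' _ _ (by simp)]
      _ ≤ ENNReal.ofReal C * (ENNReal.ofReal D * KK (n - 1 + (n - (k + 1)) - n) (x - y)) := by
          gcongr; exact h' x y hxy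
      _ ≤ _ := by
          rw [← mul_assoc, ← ENNReal.ofReal_mul hC.le,
            show n - 1 + (n - (k + 1)) - n = n - (k + 1 + 1) by omega]
          gcongr
          linarith

theorem stmt9 (n m : ℕ) (hn : 3 ≤ n) (hm2 : 2 ≤ m) (hmn : m ≤ n - 1)
    (Ω : Set (EuclideanSpace ℝ (Fin n)))
    (hΩm : MeasurableSet Ω) (hΩb : Bornology.IsBounded Ω) :
    ∃ C : ℝ, 0 < C ∧ ∀ x y : EuclideanSpace ℝ (Fin n), x ≠ y →
      ∫⁻ z in {z : Fin (m - 1) → EuclideanSpace ℝ (Fin n) | ∀ i, z i ∈ Ω},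
          ∏ j ∈ Finset.range m,
            (ENNReal.ofReal
              (‖(if j = 0 then x else if h : j - 1 < m - 1 then z ⟨j - 1, h⟩ else y) -
                 (if h : j < m - 1 then z ⟨j, h⟩ else y)‖ ^ (n - 1)))⁻¹ ≤
        ENNReal.ofReal C * (ENNReal.ofReal (‖x - y‖ ^ (n - m)))⁻¹ := by
  obtain ⟨k, rfl⟩ : ∃ k, m = k + 1 := ⟨m - 1, by omega⟩
  obtain ⟨C, hC, h⟩ := chain (n := n) k (by omega)
  exact ⟨C, hC, fun x y hxy => (setLIntegral_le_lintegral _ _).trans (h x y hxy)⟩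
end

section
/- Let η ∈ ℝ with cos η ≠ 0. Define the maps on ℝ²: s_{y,a}(x,y) = (x, y - a x), s_{x,b}(x,y) = (x - b y, y), d_{x,t}(x,y) = (t x, y), d_{y,t}(x,y) = (x, t y), and the clockwise rotation r_η(x,y) = ( x cos η + y sin η, -x sin η + y cos η ). Then r_η = d_{x, 1/cos η} ∘ s_{x, -sin η} ∘ d_{y, cos η} ∘ s_{y, tan η} as maps ℝ² → ℝ². -/
open Real

/-- factorization of the clockwise planar rotation
`r_η(x,y) = (x cos η + y sin η, -x sin η + y cos η)` into two shears and two
one-dimensional dilations: `r_η = d_{x,1/cos η} ∘ s_{x,-sin η} ∘ d_{y,cos η} ∘ s_{y,tan η}`. -/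
theorem stmt17 (η : ℝ) (hη : Real.cos η ≠ 0)
    (sy : ℝ → ℝ × ℝ → ℝ × ℝ) (hsy : ∀ a p, sy a p = (p.1, p.2 - a * p.1))
    (sx : ℝ → ℝ × ℝ → ℝ × ℝ) (hsx : ∀ b p, sx b p = (p.1 - b * p.2, p.2))
    (dx : ℝ → ℝ × ℝ → ℝ × ℝ) (hdx : ∀ t p, dx t p = (t * p.1, p.2))
    (dy : ℝ → ℝ × ℝ → ℝ × ℝ) (hdy : ∀ t p, dy t p = (p.1, t * p.2))
    (r : ℝ × ℝ → ℝ × ℝ)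
    (hr : ∀ p, r p = (p.1 * Real.cos η + p.2 * Real.sin η,
      -p.1 * Real.sin η + p.2 * Real.cos η)) :
    r = dx (1 / Real.cos η) ∘ sx (-Real.sin η) ∘ dy (Real.cos η) ∘ sy (Real.tan η) := by
  funext p
  have h1 := Real.sin_sq_add_cos_sq η
  simp only [Function.comp_apply, hsy, hsx, hdx, hdy, hr, Real.tan_eq_sin_div_cos]
  refine Prod.ext ?_ ?_
  · simp only []
    field_simp
    linear_combination p.1 * h1
  · simp only []
    field_simp
    ring
end
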